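/- arXiv:1603.04320 — 2 statements merged into one kernel-verified Lean document; each statement's English description precedes it below -/
import Mathlib

section
/- Let n ≤ 4 and let F be a homogeneous cubic polynomial in the variables X₁, …, X_n over ℂ. If for every v ∈ ℂ^n the quadric ∂_v F = Σᵢ vᵢ ∂F/∂Xᵢ is a degenerate quadratic form, then F is a cone, i.e. there exists a nonzero v ∈ ℂ^n with ∂_v F = 0 as a polynomial. -/
open MvPolynomial

/-!
Let `T x y z = ∂_x ∂_y ∂_z F` be the polarization of `F`. The hypothesis says that the bilinear form
`T x` is degenerate for every `x`, that is, the Hessian determinant of `F` vanishes identically, and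
the claim is `T v = 0` for some `v ≠ 0`.

A nonzero polynomial vector `k(x)` in the kernel of the generic Hessian matrix satisfies
`T x k(x) = 0`, and differentiating this identity and contracting with `k(x)` gives
`T u k(x) k(x) = 0` for all `u`. At a suitable point `v` this yields `k ≠ 0` with
`T v v v ≠ 0`, `T v k = 0` and `T u k k = 0`.
For `x ∈ ker (T v v)` the plane `⟨v, k⟩` is isotropic for `T x`; since `T x` is degenerate and the
dimension is at most four, this plane meets `ker (T x)`. Hence `T k x` is a multiple of `T v x`
unless `T v x = 0`, and symmetry makes the factor `μ` independent of `x`. Unless `T k = 0`, one of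
`y = v` and `y = k - μ v` then satisfies `T y y y ≠ 0` and `ker (T y y) ⊆ ker (T y)`, so that `y`
splits off, `F = c Y³ + G` with `G` the restriction of `F` to `ker (T y y)`. The form `G` satisfies
the same hypothesis in one dimension less, and if it is a cone then so is `F`.
-/

open Module Matrix

lemma dotProduct_map_derivation_mulVec_eq_zero {R A ι : Type*} [CommRing R] [CommRing A]
    [Algebra R A] [Fintype ι] (D : Derivation R A A) {M : Matrix ι ι A} (hM : M.IsSymm)
    {k : ι → A} (hk : M *ᵥ k = 0) : k ⬝ᵥ M.map D *ᵥ k = 0 := by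
  have hD : M.map D *ᵥ k + M *ᵥ (D ∘ k) = 0 := by
    ext i
    have hi := congrArg D (congrFun hk i)
    simpa [mulVec, dotProduct, Finset.sum_add_distrib, add_comm, mul_comm] using hi
  calc k ⬝ᵥ M.map D *ᵥ k = k ⬝ᵥ (M.map D *ᵥ k + M *ᵥ (D ∘ k)) := by
        rw [dotProduct_add, dotProduct_mulVec k M, ← mulVec_transpose, hM.eq, hk,
          zero_dotProduct, add_zero]
    _ = 0 := by rw [hD, dotProduct_zero]

lemma inf_ker_ne_bot_of_le_orthogonal {K V : Type*} [Field K] [AddCommGroup V] [Module K V]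
    [FiniteDimensional K V] {B : LinearMap.BilinForm K V} (hB : B.IsRefl) (hker : B.ker ≠ ⊥)
    {W : Submodule K V} (hW : W ≤ B.orthogonal W) (hdim : finrank K V ≤ 2 * finrank K W) :
    W ⊓ B.ker ≠ ⊥ := by
  intro hinf
  have hrank := LinearMap.BilinForm.finrank_add_finrank_orthogonal' (B := B) W
  rw [hinf, finrank_bot] at hrank
  have horth : W = B.orthogonal W := Submodule.eq_of_le_of_finrank_le hW (by lia)
  have hle : B.ker ≤ W := by
    rw [horth]
    exact fun w hw u _ ↦ hB w u (LinearMap.congr_fun (LinearMap.mem_ker.mp hw) u)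
  exact hker (by rwa [inf_eq_right.mpr hle] at hinf)

lemma eq_zero_of_ker_le_ker {K V M : Type*} [Field K] [AddCommGroup V] [Module K V]
    [AddCommGroup M] [Module K M] {f : V →ₗ[K] K} {g : V →ₗ[K] M} {y : V} (hfy : f y ≠ 0)
    (hgy : g y = 0) (hle : f.ker ≤ g.ker) : g = 0 := by
  rw [← LinearMap.ker_eq_top, eq_top_iff, ← LinearMap.span_singleton_sup_ker_eq_top f hfy]
  exact sup_le ((Submodule.span_singleton_le_iff_mem _ _).mpr hgy) hle

/-- Trilinear forms on `M`, as linear maps into the bilinear forms; a cubic form `F` is studied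
through its polarization, whose partial application `T v` polarizes the quadric `∂_v F`. -/
abbrev TrilinForm (R M : Type*) [CommSemiring R] [AddCommMonoid M] [Module R M] :=
  M →ₗ[R] LinearMap.BilinForm R M

namespace TrilinForm

section Semiring

variable {R M : Type*} [CommSemiring R] [AddCommMonoid M] [Module R M]

/-- Symmetry of a trilinear form under all permutations of its arguments, encoded by the two
adjacent transpositions. -/
structure IsSymm (T : TrilinForm R M) : Prop where
  swap_left : ∀ x y z, T x y z = T y x z
  swap_right : ∀ x y z, T x y z = T x z y

variable {T : TrilinForm R M}

lemma IsSymm.isSymm_apply (hT : T.IsSymm) (x : M) : LinearMap.IsSymm (T x) := ⟨hT.swap_right x⟩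

lemma IsSymm.apply_comm (hT : T.IsSymm) (x y : M) : T x y = T y x :=
  LinearMap.ext (hT.swap_left x y)

/-- The restriction of a trilinear form to a submodule, in all three arguments. -/
def restrict (T : TrilinForm R M) (N : Submodule R M) : TrilinForm R N where
  toFun x := LinearMap.BilinForm.restrict (T x) N
  map_add' x y := by ext; simp
  map_smul' c x := by ext; simp

lemma IsSymm.restrict (hT : T.IsSymm) (N : Submodule R M) : (T.restrict N).IsSymm where
  swap_left x y z := hT.swap_left x y z
  swap_right x y z := hT.swap_right x y z

end Semiring

section Hessian

variable {R M ι : Type*} [CommRing R] [AddCommGroup M] [Module R M] [Fintype ι]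

/-- The matrix of the bilinear form `T x` at the generic point `x`, in the coordinates of the basis
`b`. Six times this matrix is the Hessian of the cubic form `x ↦ T x x x`. -/
noncomputable def hessian (T : TrilinForm R M) (b : Basis ι R M) :
    Matrix ι ι (MvPolynomial ι R) :=
  .of fun i j ↦ ∑ l, T (b l) (b i) (b j) • X l

variable {T : TrilinForm R M} (b : Basis ι R M)

lemma IsSymm.isSymm_hessian (hT : T.IsSymm) : (T.hessian b).IsSymm := by
  ext i j
  simp only [hessian, transpose_apply, of_apply, hT.swap_right _ (b j)]

lemma map_eval_hessian [DecidableEq ι] (T : TrilinForm R M) (x : ι → R) :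
    (T.hessian b).map (eval x) = LinearMap.BilinForm.toMatrix b (T (b.equivFun.symm x)) := by
  ext i j
  simp [hessian, LinearMap.BilinForm.toMatrix_apply, Basis.equivFun_symm_apply, smul_eval, mul_comm]

lemma map_pderiv_hessian [DecidableEq ι] (T : TrilinForm R M) (l : ι) :
    (T.hessian b).map (pderiv l) = (LinearMap.BilinForm.toMatrix b (T (b l))).map C := by
  ext1 i j
  simp [hessian, LinearMap.BilinForm.toMatrix_apply, pderiv_X, Pi.single_apply, smul_eq_C_mul]

lemma IsSymm.apply_eval_eq_zero_of_hessian_mulVec_eq_zero (hT : T.IsSymm) {k : ι → MvPolynomial ι R}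
    (hk : T.hessian b *ᵥ k = 0) (x : ι → R) :
    T (b.equivFun.symm x) (b.equivFun.symm (eval x ∘ k)) = 0 := by
  classical
  have hkx : LinearMap.BilinForm.toMatrix b (T (b.equivFun.symm x)) *ᵥ (eval x ∘ k) = 0 := by
    ext i
    rw [← map_eval_hessian, ← RingHom.map_mulVec, hk, Pi.zero_apply, Pi.zero_apply, map_zero]
  ext z
  obtain ⟨z, rfl⟩ := b.equivFun.symm.surjective z
  rw [hT.swap_right, ← LinearMap.BilinForm.dotProduct_toMatrix_mulVec, hkx, dotProduct_zero,
    LinearMap.zero_apply]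

lemma IsSymm.apply_eval_self_eq_zero_of_hessian_mulVec_eq_zero (hT : T.IsSymm)
    {k : ι → MvPolynomial ι R} (hk : T.hessian b *ᵥ k = 0) (x : ι → R) (u : M) :
    T u (b.equivFun.symm (eval x ∘ k)) (b.equivFun.symm (eval x ∘ k)) = 0 := by
  classical
  set kx := b.equivFun.symm (eval x ∘ k)
  suffices h : (LinearMap.flip T kx).flip kx = 0 from LinearMap.congr_fun h u
  refine b.ext fun l ↦ ?_
  have hl := congrArg (eval x)
    (dotProduct_map_derivation_mulVec_eq_zero (pderiv l) (hT.isSymm_hessian b) hk)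
  rw [map_pderiv_hessian, RingHom.map_dotProduct, map_zero] at hl
  simp only [LinearMap.flip_apply, LinearMap.zero_apply, kx]
  rw [← LinearMap.BilinForm.dotProduct_toMatrix_mulVec, ← hl]
  congr 1
  ext i
  simp [RingHom.map_mulVec, Matrix.map_map, Function.comp_def]

lemma eval_X_dotProduct_hessian_mulVec_X (T : TrilinForm R M) (x : ι → R) :
    eval x (X ⬝ᵥ T.hessian b *ᵥ X) =
      T (b.equivFun.symm x) (b.equivFun.symm x) (b.equivFun.symm x) := by
  classical
  rw [← LinearMap.BilinForm.dotProduct_toMatrix_mulVec, ← map_eval_hessian, RingHom.map_dotProduct]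
  congr 1 <;> ext i <;> simp [RingHom.map_mulVec, Function.comp_def]

end Hessian

variable {K V : Type*} [Field K] [AddCommGroup V] [Module K V] {T : TrilinForm K V}

lemma IsSymm.exists_apply_self_ne_zero [NeZero (2 : K)] [NeZero (3 : K)] (hT : T.IsSymm)
    (hT0 : T ≠ 0) : ∃ v, T v v v ≠ 0 := by
  by_contra! hcube
  have hsquare (x y : V) : T y x x = 0 := by
    have hadd := hcube (x + y)
    have hsub := hcube (x - y)
    simp only [map_add, map_sub, LinearMap.add_apply, LinearMap.sub_apply, hcube,
      hT.swap_right x x y, hT.swap_left x y, hT.swap_right y y x] at hadd hsub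
    have h : (2 : K) * (3 * T y x x) = 0 := by
      linear_combination hadd - hsub
    simpa [NeZero.ne] using h
  have := invertibleOfNonzero (NeZero.ne (2 : K))
  refine hT0 (LinearMap.ext fun y ↦ by_contra fun hy ↦ ?_)
  obtain ⟨x, hx⟩ := LinearMap.BilinForm.exists_bilinForm_self_ne_zero hy (hT.isSymm_apply y)
  exact hx (hsquare x y)

lemma det_hessian_eq_zero [Infinite K] {ι : Type*} [Fintype ι] [DecidableEq ι]
    (b : Basis ι K V) (hdeg : ∀ x, (T x).ker ≠ ⊥) : (T.hessian b).det = 0 := by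
  refine MvPolynomial.funext fun x ↦ ?_
  rw [map_zero, RingHom.map_det, RingHom.mapMatrix_apply, map_eval_hessian]
  by_contra hdet
  have := b.finiteDimensional_of_finite
  exact hdeg _ ((LinearMap.BilinForm.nondegenerate_of_det_ne_zero _ b hdet).ker_eq_bot)

theorem IsSymm.exists_mem_ker_forall_apply_self_eq_zero [FiniteDimensional K V] [Infinite K]
    [NeZero (2 : K)] [NeZero (3 : K)] (hT : T.IsSymm) (hT0 : T ≠ 0)
    (hdeg : ∀ x, (T x).ker ≠ ⊥) :
    ∃ v k, T v v v ≠ 0 ∧ k ≠ 0 ∧ T v k = 0 ∧ ∀ u, T u k k = 0 := by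
  let b := finBasis K V
  obtain ⟨k, hk0, hk⟩ := exists_mulVec_eq_zero_iff.mpr (det_hessian_eq_zero b hdeg)
  obtain ⟨j, hj⟩ := Function.ne_iff.mp hk0
  have hcubic : X ⬝ᵥ T.hessian b *ᵥ X ≠ 0 := by
    obtain ⟨v, hv⟩ := hT.exists_apply_self_ne_zero hT0
    intro h
    apply hv
    simpa [h] using (eval_X_dotProduct_hessian_mulVec_X b T (b.equivFun v)).symm
  obtain ⟨x, hx⟩ : ∃ x, eval x ((X ⬝ᵥ T.hessian b *ᵥ X) * k j) ≠ 0 := by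
    by_contra! h
    exact mul_ne_zero hcubic hj (MvPolynomial.funext fun x ↦ by rw [h, map_zero])
  rw [map_mul, eval_X_dotProduct_hessian_mulVec_X] at hx
  refine ⟨b.equivFun.symm x, b.equivFun.symm (eval x ∘ k), left_ne_zero_of_mul hx, ?_,
    hT.apply_eval_eq_zero_of_hessian_mulVec_eq_zero b hk x,
    hT.apply_eval_self_eq_zero_of_hessian_mulVec_eq_zero b hk x⟩
  exact (LinearEquiv.map_ne_zero_iff _).mpr fun h ↦ right_ne_zero_of_mul hx (congrFun h j)

section Pencil

variable {v k : V}

lemma IsSymm.exists_apply_eq_smul_apply [FiniteDimensional K V] (hT : T.IsSymm)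
    (hdim : finrank K V ≤ 4) (hdeg : ∀ x, (T x).ker ≠ ⊥) (hv : T v v v ≠ 0) (hk : k ≠ 0)
    (hvk : T v k = 0) (hkk : ∀ u, T u k k = 0) {x : V} (hx : T v v x = 0) (hvx : T v x ≠ 0) :
    ∃ μ : K, T k x = μ • T v x := by
  have hindep : LinearIndependent K ![v, k] := by
    rw [LinearIndependent.pair_iff' (by rintro rfl; simp at hv)]
    rintro c rfl
    have hc : c = 0 := by simpa [hv] using LinearMap.congr_fun hvk v
    exact hk (by rw [hc, zero_smul])
  have hrank : finrank K (Submodule.span K {v, k}) = 2 := by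
    rw [← Matrix.range_cons_cons_empty v k ![], finrank_span_eq_card hindep, Fintype.card_fin]
  have hxvv : T x v v = 0 := by rw [hT.swap_left, hT.swap_right, hx]
  have hxvk : T x v k = 0 := by rw [hT.swap_left, hT.swap_right, hvk, LinearMap.zero_apply]
  have hxkv : T x k v = 0 := by rw [hT.swap_right, hxvk]
  have hisotropic : Submodule.span K {v, k} ≤ (T x).orthogonal (Submodule.span K {v, k}) := by
    intro p hp q hq
    obtain ⟨a, c, rfl⟩ := Submodule.mem_span_pair.mp hp
    obtain ⟨a', c', rfl⟩ := Submodule.mem_span_pair.mp hq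
    simp [hxvv, hxvk, hxkv, hkk]
  obtain ⟨p, hp, hp0⟩ := Submodule.exists_mem_ne_zero_of_ne_bot <|
    inf_ker_ne_bot_of_le_orthogonal (hT.isSymm_apply x).isRefl (hdeg x) hisotropic (by lia)
  obtain ⟨hpspan, hpker⟩ := Submodule.mem_inf.mp hp
  obtain ⟨α, β, rfl⟩ := Submodule.mem_span_pair.mp hpspan
  have hpencil : α • T v x + β • T k x = 0 := by
    simpa [hT.apply_comm x] using LinearMap.mem_ker.mp hpker
  have hβ : β ≠ 0 := by
    rintro rfl
    have hα : α = 0 := by simpa [hvx] using hpencil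
    simp [hα] at hp0
  refine ⟨-(α / β), LinearMap.ext fun z ↦ ?_⟩
  have hz : α * T v x z + β * T k x z = 0 := by simpa using LinearMap.congr_fun hpencil z
  rw [LinearMap.smul_apply, smul_eq_mul]
  field_simp
  linear_combination hz

lemma IsSymm.exists_forall_apply_eq_smul_apply [NeZero (2 : K)] (hT : T.IsSymm)
    (hv : T v v v ≠ 0) (hvW : ¬ (T v v).ker ≤ (T v).ker)
    (hpencil : ∀ x ∈ (T v v).ker, T v x ≠ 0 → ∃ μ : K, T k x = μ • T v x) :
    ∃ μ : K, ∀ x ∈ (T v v).ker, T k x = μ • T v x := by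
  have := invertibleOfNonzero (NeZero.ne (2 : K))
  have hrestrict : LinearMap.BilinForm.restrict (T v) (T v v).ker ≠ 0 := by
    refine fun h ↦ hvW fun x hx ↦ eq_zero_of_ker_le_ker hv ?_ fun z hz ↦ ?_
    · rw [hT.swap_right, hx]
    · exact LinearMap.congr_fun₂ h ⟨x, hx⟩ ⟨z, hz⟩
  obtain ⟨⟨x, hx⟩, hxx⟩ := LinearMap.BilinForm.exists_bilinForm_self_ne_zero hrestrict
    ⟨fun x y ↦ hT.swap_right v x y⟩
  replace hxx : T v x x ≠ 0 := hxx
  obtain ⟨μ, hμ⟩ := hpencil x hx (fun h ↦ hxx (by rw [h, LinearMap.zero_apply]))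
  have hconst {z : V} (hz : z ∈ (T v v).ker) (hzx : T v z x ≠ 0) : T k z = μ • T v z := by
    obtain ⟨ν, hν⟩ := hpencil z hz (fun h ↦ hzx (by rw [h, LinearMap.zero_apply]))
    have hνμ : ν * T v z x = μ * T v z x := by
      calc ν * T v z x = T k z x := by rw [hν, LinearMap.smul_apply, smul_eq_mul]
        _ = T k x z := hT.swap_right k z x
        _ = μ * T v z x := by rw [hμ, LinearMap.smul_apply, smul_eq_mul, hT.swap_right v x z]
    rw [hν, mul_right_cancel₀ hzx hνμ]
  refine ⟨μ, fun z hz ↦ ?_⟩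
  by_cases hzx : T v z x = 0
  · have hsum := hconst (add_mem hz hx) (by simpa [hzx] using hxx)
    rw [map_add, map_add, smul_add, hμ] at hsum
    exact add_right_cancel hsum
  · exact hconst hz hzx

lemma IsSymm.exists_ker_apply_self_le_ker [NeZero (2 : K)] (hT : T.IsSymm)
    (hv : T v v v ≠ 0) (hk : T k ≠ 0) (hvk : T v k = 0) (hkk : ∀ u, T u k k = 0)
    (hpencil : ∀ x ∈ (T v v).ker, T v x ≠ 0 → ∃ μ : K, T k x = μ • T v x) :
    ∃ y, T y y y ≠ 0 ∧ (T y y).ker ≤ (T y).ker := by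
  by_cases hvW : (T v v).ker ≤ (T v).ker
  · exact ⟨v, hv, hvW⟩
  obtain ⟨μ, hμ⟩ := hT.exists_forall_apply_eq_smul_apply hv hvW hpencil
  have hkv : T k v = 0 := by rw [hT.apply_comm, hvk]
  have hkk' : T k k = 0 := LinearMap.ext fun u ↦ by
    rw [hT.swap_right, hT.swap_left, hkk, LinearMap.zero_apply]
  have hμ0 : μ ≠ 0 := by
    rintro rfl
    exact hk (eq_zero_of_ker_le_ker hv hkv fun x hx ↦ by simpa using hμ x hx)
  have hyy : T (k - μ • v) (k - μ • v) = μ ^ 2 • T v v := by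
    simp [hkv, hkk', hvk, smul_smul, pow_two]
  refine ⟨k - μ • v, ?_, fun x hx ↦ ?_⟩
  · rw [hyy]
    simp [hvk, hμ0, hT.swap_right v v k, hv]
  · have hxv : x ∈ (T v v).ker := by
      rw [hyy] at hx
      simpa [hμ0] using hx
    simp [hμ x hxv]

end Pencil

section Restrict

variable {y : V}

lemma IsSymm.ker_restrict_apply_ne_bot (hT : T.IsSymm) (hy : (T y y).ker ≤ (T y).ker)
    (hdeg : ∀ x, (T x).ker ≠ ⊥) (x : (T y y).ker) :
    (T.restrict (T y y).ker x).ker ≠ ⊥ := by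
  obtain ⟨w, hw, hw0⟩ := Submodule.exists_mem_ne_zero_of_ne_bot (hdeg (x + y))
  have hsum : T x w + T y w = 0 := by simpa using hw
  have hyx : T y x = 0 := hy x.2
  have hwy : w ∈ (T y y).ker := by
    simpa [hT.swap_right _ w y, hT.swap_left _ y w, hyx] using LinearMap.congr_fun hsum y
  have hxw : T x w = 0 := by rwa [LinearMap.mem_ker.mp (hy hwy), add_zero] at hsum
  refine (Submodule.ne_bot_iff _).mpr ⟨⟨w, hwy⟩, ?_, by simpa using hw0⟩
  exact LinearMap.ext fun z ↦ LinearMap.congr_fun hxw z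

lemma IsSymm.ker_ne_bot_of_ker_restrict_ne_bot (hT : T.IsSymm) (hyyy : T y y y ≠ 0)
    (hy : (T y y).ker ≤ (T y).ker) (hker : (T.restrict (T y y).ker).ker ≠ ⊥) : T.ker ≠ ⊥ := by
  obtain ⟨k, hk, hk0⟩ := Submodule.exists_mem_ne_zero_of_ne_bot hker
  have hky : T k y = 0 := by rw [hT.apply_comm, hy k.2]
  refine (Submodule.ne_bot_iff _).mpr ⟨k, ?_, by simpa using hk0⟩
  refine eq_zero_of_ker_le_ker hyyy hky fun w hw ↦ ?_
  refine eq_zero_of_ker_le_ker hyyy (by rw [hT.swap_right, hky, LinearMap.zero_apply]) fun z hz ↦ ?_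
  exact LinearMap.congr_fun₂ (LinearMap.mem_ker.mp hk) ⟨w, hw⟩ ⟨z, hz⟩

end Restrict

theorem IsSymm.ker_ne_bot_of_finrank_le_four {K V : Type*} [Field K] [Infinite K]
    [NeZero (2 : K)] [NeZero (3 : K)] [AddCommGroup V] [Module K V] [FiniteDimensional K V]
    {T : TrilinForm K V} (hT : T.IsSymm) (hdim : finrank K V ≤ 4)
    (hdeg : ∀ x, (T x).ker ≠ ⊥) : T.ker ≠ ⊥ := by
  by_cases hT0 : T = 0
  · simpa [hT0] using hdeg 0
  obtain ⟨v, k, hv, hk0, hvk, hkk⟩ := hT.exists_mem_ker_forall_apply_self_eq_zero hT0 hdeg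
  by_cases hk : T k = 0
  · exact (Submodule.ne_bot_iff _).mpr ⟨k, hk, hk0⟩
  obtain ⟨y, hyyy, hy⟩ := hT.exists_ker_apply_self_le_ker hv hk hvk hkk
    fun x hx hvx ↦ hT.exists_apply_eq_smul_apply hdim hdeg hv hk0 hvk hkk hx hvx
  have hlt : finrank K (T y y).ker < finrank K V :=
    Submodule.finrank_lt fun h ↦ hyyy (LinearMap.congr_fun (LinearMap.ker_eq_top.mp h) y)
  exact hT.ker_ne_bot_of_ker_restrict_ne_bot hyyy hy <|
    IsSymm.ker_ne_bot_of_finrank_le_four (hT.restrict _) (hlt.le.trans hdim)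
      (hT.ker_restrict_apply_ne_bot hy hdeg)
termination_by finrank K V

end TrilinForm

section DirDeriv

variable {R σ : Type*}

lemma pderiv_pderiv_comm [CommRing R] (i j : σ) (p : MvPolynomial σ R) :
    pderiv i (pderiv j p) = pderiv j (pderiv i p) := by
  classical
  have h : ⁅(pderiv i : Derivation R (MvPolynomial σ R) (MvPolynomial σ R)),
      (pderiv j : Derivation R (MvPolynomial σ R) (MvPolynomial σ R))⁆ = 0 :=
    derivation_ext fun l ↦ by
      simp [Derivation.commutator_apply, pderiv_X, Pi.single_apply, apply_ite]
  rw [← sub_eq_zero, ← Derivation.commutator_apply, h, Derivation.zero_apply]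

variable [Fintype σ]

/-- The directional derivative `∂_v = ∑ i, v i • ∂/∂X i`, as a linear function of `v`. -/
noncomputable def dirDeriv [CommSemiring R] : (σ → R) →ₗ[R] Module.End R (MvPolynomial σ R) :=
  Fintype.linearCombination R fun i ↦ (pderiv i).toLinearMap

lemma dirDeriv_apply [CommSemiring R] (v : σ → R) (p : MvPolynomial σ R) :
    dirDeriv v p = ∑ i, v i • pderiv i p := by
  simp [dirDeriv, Fintype.linearCombination_apply]

lemma dirDeriv_comm [CommRing R] (v w : σ → R) (p : MvPolynomial σ R) :
    dirDeriv v (dirDeriv w p) = dirDeriv w (dirDeriv v p) := by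
  simp only [dirDeriv_apply, map_sum, map_smul, Finset.smul_sum, smul_comm (v _)]
  rw [Finset.sum_comm]
  simp only [pderiv_pderiv_comm]

lemma isHomogeneous_dirDeriv [CommSemiring R] {p : MvPolynomial σ R} {m : ℕ}
    (hp : p.IsHomogeneous m) (v : σ → R) : (dirDeriv v p).IsHomogeneous (m - 1) := by
  rw [dirDeriv_apply]
  exact Submodule.sum_mem (homogeneousSubmodule σ R (m - 1)) fun i _ ↦
    Submodule.smul_mem _ _ hp.pderiv

lemma eq_zero_of_forall_dirDeriv_eq_zero [CommSemiring R] [NoZeroDivisors R]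
    {p : MvPolynomial σ R} {m : ℕ} (hm : (m : R) ≠ 0) (hp : p.IsHomogeneous m)
    (h : ∀ v, dirDeriv v p = 0) : p = 0 := by
  classical
  have hpderiv (i : σ) : pderiv i p = 0 := by
    simpa [dirDeriv_apply, Pi.single_apply] using h (Pi.single i 1)
  have heuler : m • p = 0 := by simpa [hpderiv] using hp.sum_X_mul_pderiv.symm
  rw [← Nat.cast_smul_eq_nsmul R, smul_eq_C_mul] at heuler
  exact (mul_eq_zero.mp heuler).resolve_left (C_ne_zero.mpr hm)

/-- The polarization `(x, y, z) ↦ ∂_z ∂_y ∂_x F` of a cubic form `F`. When `F` is homogeneous of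
degree 3, this third derivative is a constant polynomial, read off by the constant coefficient. -/
noncomputable def polarForm [CommSemiring R] (F : MvPolynomial σ R) : TrilinForm R (σ → R) :=
  (dirDeriv.flip ∘ₗ dirDeriv.flip F).compr₂ (dirDeriv.flip.compr₂ (lcoeff R 0))

lemma polarForm_apply [CommSemiring R] (F : MvPolynomial σ R) (x y z : σ → R) :
    polarForm F x y z = constantCoeff (dirDeriv z (dirDeriv y (dirDeriv x F))) := rfl

lemma isSymm_polarForm [CommRing R] (F : MvPolynomial σ R) : (polarForm F).IsSymm where
  swap_left x y z := by rw [polarForm_apply, dirDeriv_comm y, polarForm_apply]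
  swap_right x y z := by rw [polarForm_apply, dirDeriv_comm z, polarForm_apply]

lemma dirDeriv_eq_zero_of_polarForm_eq_zero [CommSemiring R] [NoZeroDivisors R]
    [NeZero (2 : R)] {F : MvPolynomial σ R} (hF : F.IsHomogeneous 3) {v : σ → R}
    (hv : polarForm F v = 0) : dirDeriv v F = 0 := by
  have hquadratic : (dirDeriv v F).IsHomogeneous 2 := isHomogeneous_dirDeriv hF v
  refine eq_zero_of_forall_dirDeriv_eq_zero (by simp [NeZero.ne]) hquadratic fun y ↦ ?_
  have hlinear : (dirDeriv y (dirDeriv v F)).IsHomogeneous 1 := isHomogeneous_dirDeriv hquadratic y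
  have : Nontrivial R := nontrivial_of_ne 2 0 two_ne_zero
  refine eq_zero_of_forall_dirDeriv_eq_zero (by simp) hlinear fun z ↦ ?_
  have hconst : (dirDeriv z (dirDeriv y (dirDeriv v F))).IsHomogeneous 0 :=
    isHomogeneous_dirDeriv hlinear z
  rw [totalDegree_eq_zero_iff_eq_C.mp ((totalDegree_zero_iff_isHomogeneous _).mpr hconst),
    ← constantCoeff_eq, ← polarForm_apply, hv, LinearMap.zero_apply, LinearMap.zero_apply, C_0]

end DirDeriv

theorem stmt_3_general {K σ : Type*} [Field K] [Infinite K] [NeZero (2 : K)] [NeZero (3 : K)]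
    [Fintype σ] (hσ : Fintype.card σ ≤ 4) (F : MvPolynomial σ K) (hF : F.IsHomogeneous 3)
    (hdeg : ∀ v : σ → K, ∃ w : σ → K, w ≠ 0 ∧
      ∑ j, w j • pderiv j (∑ i, v i • pderiv i F) = 0) :
    ∃ v : σ → K, v ≠ 0 ∧ ∑ i, v i • pderiv i F = 0 := by
  simp only [← dirDeriv_apply] at hdeg ⊢
  have hker (v : σ → K) : (polarForm F v).ker ≠ ⊥ := by
    obtain ⟨w, hw0, hw⟩ := hdeg v
    refine (Submodule.ne_bot_iff _).mpr ⟨w, LinearMap.ext fun z ↦ ?_, hw0⟩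
    rw [polarForm_apply, hw, map_zero, map_zero, LinearMap.zero_apply]
  obtain ⟨v, hv, hv0⟩ := Submodule.exists_mem_ne_zero_of_ne_bot <|
    (isSymm_polarForm F).ker_ne_bot_of_finrank_le_four (by rwa [finrank_fintype_fun_eq_card]) hker
  exact ⟨v, hv0, dirDeriv_eq_zero_of_polarForm_eq_zero hF hv⟩

/-- (Hesse, Gordan–Noether; see Lossen.) A homogeneous cubic polynomial in `n ≤ 4` variables
all of whose directional derivatives (partial derivatives) are degenerate quadratic forms is
a cone. -/
theorem stmt_3 {n : ℕ} (hn : n ≤ 4) (F : MvPolynomial (Fin n) ℂ)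
    (hF : F.IsHomogeneous 3)
    (hdeg : ∀ v : Fin n → ℂ, ∃ w : Fin n → ℂ, w ≠ 0 ∧
      ∑ j, w j • pderiv j (∑ i, v i • pderiv i F) = 0) :
    ∃ v : Fin n → ℂ, v ≠ 0 ∧ ∑ i, v i • pderiv i F = 0 :=
  stmt_3_general (by rwa [Fintype.card_fin]) F hF hdeg
end

section
/- Let V ⊆ ℂ^n be an open set and let f, f₁, …, f_{2n} : V → ℂ be holomorphic functions such that at every point b ∈ V the complex differentials df₁(b), …, df_{2n}(b) are linearly independent over ℝ (as real-linear functionals on ℂ^n), and let a = (a₁, …, a_{2n}) : V → ℝ^{2n} be the unique map with real values such that df(b) = Σᵢ aᵢ(b)·dfᵢ(b) for every b ∈ V. Assume the real derivative da_b has constant rank r at every b ∈ V. Then for every c ∈ ℝ^{2n} and every connected component F of a^{-1}(c), there exist linearly independent vectors u⁽¹⁾, …, u⁽ʳ⁾ ∈ ℝ^{2n} such that for each j the holomorphic function Σᵢ u⁽ʲ⁾ᵢ·fᵢ is constant on F. -/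
/-!
If `df = ∑ aᵢ dfᵢ`, then the Legendre-type function `g = ∑ aᵢ fᵢ - f` satisfies
`dg = ∑ fᵢ daᵢ`, so that `d(a, g) = (da, ∑ fᵢ daᵢ)` has the same kernel as `da`. When `da` has
constant rank, `(a, g)` therefore factors locally through a submersion of the form `φ ∘ a`, and the
range of `d(a, g)` depends only on the value of `a`, locally and hence on each connected component
of a fibre. This range at `b` is the graph of `u ↦ ∑ uᵢ fᵢ(b)` over the range of `da_b`: for every
`u` in the range of `da` at one point of the component, `∑ uᵢ fᵢ` is constant on the component.

In the holomorphic case the required smoothness comes from the Schwarz lemma: it bounds the Taylor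
remainder of order two uniformly, so difference quotients of `f` converge locally uniformly and
their limits, the directional derivatives of `f`, are again holomorphic.
-/

open Filter Metric Set
open scoped Topology ContDiff

section LinearMaps

theorem ker_comp_eq_ker_of_surjective {K M N P : Type*} [DivisionRing K] [AddCommGroup M]
    [Module K M] [AddCommGroup N] [Module K N] [AddCommGroup P] [Module K P]
    [FiniteDimensional K P] {S : M →ₗ[K] N} {φ : N →ₗ[K] P} [FiniteDimensional K S.range]
    (hsurj : Function.Surjective (φ ∘ₗ S))
    (hrank : Module.finrank K S.range = Module.finrank K P) : (φ ∘ₗ S).ker = S.ker := by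
  have hsurj' : Function.Surjective (φ ∘ₗ S.range.subtype) := by
    intro y
    obtain ⟨x, hx⟩ := hsurj y
    exact ⟨⟨S x, x, rfl⟩, hx⟩
  have hinj := (LinearMap.injective_iff_surjective_of_finrank_eq_finrank hrank).2 hsurj'
  have hker : (φ ∘ₗ S.range.subtype ∘ₗ S.rangeRestrict).ker = S.rangeRestrict.ker :=
    LinearMap.ker_comp_of_ker_eq_bot _ (LinearMap.ker_eq_bot.2 hinj)
  rwa [LinearMap.ker_rangeRestrict] at hker

variable {𝕜 E F : Type*} [NontriviallyNormedField 𝕜] [NormedAddCommGroup E] [NormedSpace 𝕜 E]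
  [NormedAddCommGroup F] [NormedSpace 𝕜 F]

theorem isOpen_setOf_hasRightInverse [CompleteSpace F] :
    IsOpen {A : E →L[𝕜] F | A.HasRightInverse} := by
  refine isOpen_iff_mem_nhds.2 fun A ⟨R, hR⟩ ↦ ?_
  have hunit : IsUnit (A ∘L R) := by
    rw [show A ∘L R = 1 from ContinuousLinearMap.ext hR]
    exact isUnit_one
  have hcont : Continuous fun B : E →L[𝕜] F ↦ B ∘L R := by fun_prop
  filter_upwards [hcont.continuousAt.eventually (Units.isOpen.mem_nhds hunit)] with B hB
  obtain ⟨R', hR'⟩ := hB.exists_right_inv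
  exact ⟨R ∘L R', DFunLike.congr_fun hR'⟩

theorem isOpen_setOf_surjective [CompleteSpace 𝕜] [FiniteDimensional 𝕜 F] :
    IsOpen {A : E →L[𝕜] F | Function.Surjective A} := by
  have := FiniteDimensional.complete 𝕜 F
  convert isOpen_setOf_hasRightInverse (𝕜 := 𝕜) (E := E) (F := F) using 3 with A
  exact ⟨.of_surjective_of_finiteDimensional, fun h ↦ h.surjective⟩

theorem exists_projection_surjective_and_ker_eq {𝕜 E F X : Type*} [RCLike 𝕜]
    [NormedAddCommGroup E] [NormedSpace 𝕜 E] [NormedAddCommGroup F] [NormedSpace 𝕜 F]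
    [FiniteDimensional 𝕜 F] [TopologicalSpace X] {T : X → E →L[𝕜] F} {p : X}
    (hT : ContinuousAt T p)
    (hrank : ∀ᶠ x in 𝓝 p, Module.finrank 𝕜 (T x).range = Module.finrank 𝕜 (T p).range) :
    ∃ φ : F →L[𝕜] (T p).range, ∀ᶠ x in 𝓝 p,
      Function.Surjective (φ ∘L T x) ∧ (φ ∘L T x).ker = (T x).ker := by
  obtain ⟨φ, hφ⟩ := Submodule.ClosedComplemented.of_finiteDimensional (T p).range
  have hφT : Function.Surjective (φ ∘L T p) := by
    rintro ⟨_, v, rfl⟩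
    exact ⟨v, hφ ⟨T p v, v, rfl⟩⟩
  have hcont : ContinuousAt (fun x ↦ φ ∘L T x) p := continuousAt_const.clm_comp hT
  refine ⟨φ, ?_⟩
  filter_upwards [hrank, hcont.eventually (isOpen_setOf_surjective.mem_nhds hφT)] with x hx hsurj
  exact ⟨hsurj, ker_comp_eq_ker_of_surjective (S := (T x).toLinearMap)
    (φ := φ.toLinearMap) hsurj hx⟩

theorem hasLeftInverse_of_injective {𝕜 E F : Type*} [RCLike 𝕜] [NormedAddCommGroup E]
    [NormedSpace 𝕜 E] [FiniteDimensional 𝕜 E] [NormedAddCommGroup F] [NormedSpace 𝕜 F]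
    {A : E →L[𝕜] F} (hA : Function.Injective A) : A.HasLeftInverse := by
  obtain ⟨P, hP⟩ := Submodule.ClosedComplemented.of_finiteDimensional A.range
  let e := (LinearEquiv.ofInjective (A : E →ₗ[𝕜] F) hA).toContinuousLinearEquiv
  refine ⟨(e.symm : A.range →L[𝕜] E) ∘L P, fun x ↦ ?_⟩
  exact (congrArg e.symm (hP (e x))).trans (e.symm_apply_apply x)

end LinearMaps

section LinearSystems

variable {𝕜 E X H : Type*} [NontriviallyNormedField 𝕜] [NormedAddCommGroup E] [NormedSpace 𝕜 E]
  [NormedAddCommGroup X] [NormedSpace 𝕜 X] [NormedAddCommGroup H] [NormedSpace 𝕜 H]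
  {ι : Type*} [Fintype ι] {n : WithTop ℕ∞}

theorem contDiffAt_of_apply_eq [CompleteSpace X] {A : E → X →L[𝕜] H} {w : E → X} {y : E → H}
    {b₀ : E} (hA : ContDiffAt 𝕜 n A b₀) (hinv : (A b₀).HasLeftInverse)
    (hy : ContDiffAt 𝕜 n y b₀) (hw : ∀ᶠ b in 𝓝 b₀, A b (w b) = y b) : ContDiffAt 𝕜 n w b₀ := by
  obtain ⟨L, hL⟩ := hinv
  have hLA : ContDiffAt 𝕜 n (fun b ↦ L ∘L A b) b₀ := contDiffAt_const.clm_comp hA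
  have hLA₀ : L ∘L A b₀ = (1 : (X →L[𝕜] X)ˣ) := ContinuousLinearMap.ext hL
  have hunit : ∀ᶠ b in 𝓝 b₀, IsUnit (L ∘L A b) :=
    hLA.continuousAt.eventually (Units.isOpen.mem_nhds ⟨1, hLA₀.symm⟩)
  have hring : ContDiffAt 𝕜 n (fun b ↦ Ring.inverse (L ∘L A b)) b₀ :=
    ContDiffAt.comp b₀ (g := Ring.inverse) (hLA₀ ▸ contDiffAt_ringInverse 𝕜 1) hLA
  refine (hring.clm_apply (contDiffAt_const.clm_apply hy : ContDiffAt 𝕜 n (fun b ↦ L (y b)) b₀))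
    |>.congr_of_eventuallyEq ?_
  filter_upwards [hunit, hw] with b hb hwb
  calc w b = (Ring.inverse (L ∘L A b) * (L ∘L A b)) (w b) := by
        rw [Ring.inverse_mul_cancel _ hb]; rfl
    _ = Ring.inverse (L ∘L A b) (L (y b)) := by rw [← hwb]; rfl

variable (𝕜) in
/-- The map `(ι → 𝕜) → H` sending `u` to the linear combination `∑ i, u i • w i`, as a continuous
linear map; the bundled counterpart of `Fintype.linearCombination`. -/
noncomputable def linearCombinationL (w : ι → H) : (ι → 𝕜) →L[𝕜] H :=
  ∑ i, (ContinuousLinearMap.proj i).smulRight (w i)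

@[simp]
theorem linearCombinationL_apply (w : ι → H) (u : ι → 𝕜) :
    linearCombinationL 𝕜 w u = ∑ i, u i • w i := by
  simp [linearCombinationL]

theorem linearCombinationL_injective {w : ι → H} (hw : LinearIndependent 𝕜 w) :
    Function.Injective (linearCombinationL 𝕜 w) := by
  refine (injective_iff_map_eq_zero _).2 fun u hu ↦ ?_
  exact funext (Fintype.linearIndependent_iff.1 hw u (linearCombinationL_apply w u ▸ hu))

theorem hasFDerivAt_sum_smul_sub {a : E → ι → 𝕜} {a' : E →L[𝕜] ι → 𝕜} {w : ι → E → H}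
    {w' : ι → E →L[𝕜] H} {f : E → H} {b : E} (ha : HasFDerivAt a a' b)
    (hw : ∀ i, HasFDerivAt (w i) (w' i) b) (hf : HasFDerivAt f (∑ i, a b i • w' i) b) :
    HasFDerivAt (fun x ↦ ∑ i, a x i • w i x - f x)
      (linearCombinationL 𝕜 (fun i ↦ w i b) ∘L a') b := by
  have hsum := HasFDerivAt.fun_sum fun i (_ : i ∈ Finset.univ) ↦
    (hasFDerivAt_pi'.1 ha i).fun_smul (hw i)
  refine (hsum.sub hf).congr_fderiv ?_
  ext v
  simp [Finset.sum_add_distrib]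

theorem contDiffAt_of_sum_smul_eq {𝕜 E H : Type*} [RCLike 𝕜] [NormedAddCommGroup E]
    [NormedSpace 𝕜 E] [NormedAddCommGroup H] [NormedSpace 𝕜 H] {w : ι → E → H} {y : E → H}
    {a : E → ι → 𝕜} {b₀ : E} (hw : ∀ i, ContDiffAt 𝕜 n (w i) b₀)
    (hindep : LinearIndependent 𝕜 (fun i ↦ w i b₀)) (hy : ContDiffAt 𝕜 n y b₀)
    (ha : ∀ᶠ b in 𝓝 b₀, ∑ i, a b i • w i b = y b) : ContDiffAt 𝕜 n a b₀ := by
  have hL : ContDiffAt 𝕜 n (fun b ↦ linearCombinationL 𝕜 (fun i ↦ w i b)) b₀ :=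
    ContDiffAt.sum fun i _ ↦ contDiffAt_const.smulRight (hw i)
  refine contDiffAt_of_apply_eq hL
    (hasLeftInverse_of_injective (linearCombinationL_injective hindep)) hy ?_
  simpa only [linearCombinationL_apply] using ha

end LinearSystems

section ConstantRank

variable {E F K H : Type*} [NormedAddCommGroup E] [NormedSpace ℝ E]
  [NormedAddCommGroup F] [NormedSpace ℝ F] [NormedAddCommGroup K] [NormedSpace ℝ K]
  [NormedAddCommGroup H] [NormedSpace ℝ H]

theorem prodMk_apply_eq_of_fderiv_inr_eq_zero {h : F × K → H} {y : F} {t : Set K} (ht : IsOpen t)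
    (ht' : IsPreconnected t) (hd : ∀ z ∈ t, DifferentiableAt ℝ h (y, z))
    (h₀ : ∀ z ∈ t, ∀ k, fderiv ℝ h (y, z) (0, k) = 0) {z z' : K} (hz : z ∈ t) (hz' : z' ∈ t) :
    h (y, z) = h (y, z') := by
  have hderiv : ∀ z ∈ t, HasFDerivAt (fun z ↦ h (y, z)) (0 : K →L[ℝ] H) z := fun z hz ↦ by
    have h₀' : fderiv ℝ h (y, z) ∘L .inr ℝ F K = 0 := ContinuousLinearMap.ext (h₀ z hz)
    exact h₀' ▸ (hd z hz).hasFDerivAt.comp z (hasFDerivAt_prodMk_right y z)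
  exact ht.is_const_of_fderiv_eq_zero ht'
    (fun z hz ↦ (hderiv z hz).differentiableAt.differentiableWithinAt)
    (fun z hz ↦ (hderiv z hz).fderiv) hz hz'

theorem exists_local_straightening [CompleteSpace E] [CompleteSpace F] {π : E → F} {p : E}
    (hπ : ContDiffAt ℝ 1 π p) (hsurj : (fderiv ℝ π p).HasRightInverse) :
    ∃ (ρ : E → (fderiv ℝ π p).ker) (ψ : F × (fderiv ℝ π p).ker → E), ContinuousAt ρ p ∧
      ContDiffAt ℝ 1 ψ (π p, ρ p) ∧ (∀ᶠ x in 𝓝 p, ψ (π x, ρ x) = x) ∧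
        ∀ᶠ w in 𝓝 (π p, ρ p), π (ψ w) = w.1 := by
  have hstrict : HasStrictFDerivAt π (fderiv ℝ π p) p := hπ.hasStrictFDerivAt one_ne_zero
  let φ := hstrict.implicitFunctionDataOfComplemented π _
    (LinearMap.range_eq_top.2 hsurj.surjective)
    (ContinuousLinearMap.closedComplemented_ker_of_rightInverse _ _ hsurj.choose_spec)
  have hρ : ContDiff ℝ 1 φ.rightFun :=
    (ContinuousLinearMap.contDiff _).comp (contDiff_id.sub contDiff_const)
  exact ⟨φ.rightFun, Function.uncurry φ.implicitFunction, hρ.continuous.continuousAt,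
    ImplicitFunctionData.contDiffAt_implicitFunction (φ := φ) hπ hρ.contDiffAt one_ne_zero,
    φ.implicitFunction_apply_image, φ.leftFun_implicitFunction⟩

theorem fderiv_comp_inr_eq_zero_of_ker_fderiv_le {π : E → F} {g : E → H} {ψ : F × K → E}
    {w : F × K} (hψ : DifferentiableAt ℝ ψ w) (hπ : DifferentiableAt ℝ π (ψ w))
    (hπψ : π ∘ ψ =ᶠ[𝓝 w] Prod.fst) (hg : DifferentiableAt ℝ g (ψ w))
    (hker : (fderiv ℝ π (ψ w)).ker ≤ (fderiv ℝ g (ψ w)).ker) (k : K) :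
    fderiv ℝ (g ∘ ψ) w (0, k) = 0 := by
  have hfst : fderiv ℝ π (ψ w) ∘L fderiv ℝ ψ w = .fst ℝ F K := by
    rw [← fderiv_comp w hπ hψ, hπψ.fderiv_eq, fderiv_fst]
  have hvert : fderiv ℝ π (ψ w) (fderiv ℝ ψ w (0, k)) = 0 := DFunLike.congr_fun hfst (0, k)
  rw [fderiv_comp w hg hψ]
  exact hker hvert

theorem exists_eventuallyEq_comp_of_ker_fderiv_le [CompleteSpace E] [CompleteSpace F] {π : E → F}
    {g : E → H} {p : E} (hπ : ContDiffAt ℝ 1 π p) (hsurj : (fderiv ℝ π p).HasRightInverse)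
    (hg : ∀ᶠ x in 𝓝 p, DifferentiableAt ℝ g x)
    (hker : ∀ᶠ x in 𝓝 p, (fderiv ℝ π x).ker ≤ (fderiv ℝ g x).ker) :
    ∃ G : F → H, (∀ᶠ y in 𝓝 (π p), DifferentiableAt ℝ G y) ∧ g =ᶠ[𝓝 p] G ∘ π := by
  obtain ⟨ρ, ψ, hρ, hψ, hψπ, hπψ⟩ := exists_local_straightening hπ hsurj
  have hψp : ψ (π p, ρ p) = p := hψπ.self_of_nhds
  have hψ_lim : Tendsto ψ (𝓝 (π p, ρ p)) (𝓝 p) := by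
    simpa only [hψp] using hψ.continuousAt.tendsto
  obtain ⟨ε, hε, hball⟩ : ∃ ε > 0, ∀ y ∈ ball (π p) ε, ∀ z ∈ ball (ρ p) ε,
      DifferentiableAt ℝ (g ∘ ψ) (y, z) ∧ ∀ k, fderiv ℝ (g ∘ ψ) (y, z) (0, k) = 0 := by
    suffices h : ∀ᶠ w in 𝓝 (π p, ρ p),
        DifferentiableAt ℝ (g ∘ ψ) w ∧ ∀ k, fderiv ℝ (g ∘ ψ) w (0, k) = 0 by
      obtain ⟨ε, hε, hball⟩ := eventually_nhds_iff_ball.1 h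
      exact ⟨ε, hε, fun y hy z hz ↦ hball _ (ball_prod_same (π p) (ρ p) ε ▸ ⟨hy, hz⟩)⟩
    filter_upwards [hψ_lim.eventually ((hπ.eventually (by simp)).and (hg.and hker)),
      hψ.eventually (by simp), hπψ.eventually_nhds] with w ⟨hπw, hgw, hkerw⟩ hψw hπψw
    have hψw' := hψw.differentiableAt one_ne_zero
    exact ⟨hgw.comp w hψw', fderiv_comp_inr_eq_zero_of_ker_fderiv_le hψw'
      (hπw.differentiableAt one_ne_zero) hπψw hgw hkerw⟩
  refine ⟨fun y ↦ g (ψ (y, ρ p)), ?_, ?_⟩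
  · filter_upwards [ball_mem_nhds _ hε] with y hy
    exact DifferentiableAt.comp (f := fun y ↦ (y, ρ p)) y (hball y hy _ (mem_ball_self hε)).1
      (hasFDerivAt_prodMk_left y (ρ p)).differentiableAt
  · filter_upwards [hπ.continuousAt (ball_mem_nhds _ hε), hρ (ball_mem_nhds _ hε), hψπ]
      with x hπx hρx hψx
    calc g x = (g ∘ ψ) (π x, ρ x) := congrArg g hψx.symm
      _ = (g ∘ ψ) (π x, ρ p) :=
        prodMk_apply_eq_of_fderiv_inr_eq_zero isOpen_ball (convex_ball _ _).isPreconnected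
          (fun z hz ↦ (hball _ hπx z hz).1) (fun z hz ↦ (hball _ hπx z hz).2) hρx
          (mem_ball_self hε)

variable [FiniteDimensional ℝ F] [CompleteSpace E]

theorem eventually_range_fderiv_eq {a : E → F} {h : E → H} {p : E}
    (ha : ContDiffAt ℝ 1 a p)
    (hrank : ∀ᶠ x in 𝓝 p,
      Module.finrank ℝ (fderiv ℝ a x).range = Module.finrank ℝ (fderiv ℝ a p).range)
    (hh : ∀ᶠ x in 𝓝 p, DifferentiableAt ℝ h x)
    (hker : ∀ᶠ x in 𝓝 p, (fderiv ℝ a x).ker ≤ (fderiv ℝ h x).ker) :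
    ∀ᶠ x in 𝓝 p, a x = a p → (fderiv ℝ h x).range = (fderiv ℝ h p).range := by
  have ha' : ContinuousAt (fderiv ℝ a) p := (ha.fderiv_right (m := 0) le_rfl).continuousAt
  obtain ⟨φ, hφ⟩ := exists_projection_surjective_and_ker_eq ha' hrank
  have hπ : ContDiffAt ℝ 1 (φ ∘ a) p := φ.contDiff.contDiffAt.comp p ha
  have hdπ : ∀ᶠ x in 𝓝 p, HasFDerivAt (φ ∘ a) (φ ∘L fderiv ℝ a x) x := by
    filter_upwards [ha.eventually (by simp)] with x hx
    exact φ.hasFDerivAt.comp x (hx.differentiableAt one_ne_zero).hasFDerivAt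
  obtain ⟨G, hG, hhG⟩ : ∃ G : (fderiv ℝ a p).range → H,
      (∀ᶠ y in 𝓝 (φ (a p)), DifferentiableAt ℝ G y) ∧ h =ᶠ[𝓝 p] G ∘ (φ ∘ a) := by
    refine exists_eventuallyEq_comp_of_ker_fderiv_le hπ ?_ hh ?_
    · rw [hdπ.self_of_nhds.fderiv]
      exact .of_surjective_of_finiteDimensional hφ.self_of_nhds.1
    · filter_upwards [hdπ, hφ, hker] with x hdπx hφx hkerx
      rwa [hdπx.fderiv, hφx.2]
  have hrange : ∀ᶠ x in 𝓝 p, (fderiv ℝ h x).range = (fderiv ℝ G (φ (a x))).range := by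
    filter_upwards [hdπ, hφ, hhG.eventuallyEq_nhds, hπ.continuousAt.eventually hG]
      with x hdπx hφx hhGx hGx
    rw [hhGx.fderiv_eq, (hGx.hasFDerivAt.comp x hdπx).fderiv]
    exact LinearMap.range_comp_of_range_eq_top _ (LinearMap.range_eq_top.2 hφx.1)
  filter_upwards [hrange] with x hx hax
  rw [hx, hax, hrange.self_of_nhds]

theorem range_fderiv_eq_of_mem_connectedComponentIn {a : E → F} {h : E → H} {V : Set E}
    (hV : IsOpen V) (ha : ContDiffOn ℝ 1 a V) {r : ℕ}
    (hrank : ∀ x ∈ V, Module.finrank ℝ (fderiv ℝ a x).range = r) (hh : DifferentiableOn ℝ h V)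
    (hker : ∀ x ∈ V, (fderiv ℝ a x).ker ≤ (fderiv ℝ h x).ker) {c : F} {p q : E}
    (hq : q ∈ connectedComponentIn {x | x ∈ V ∧ a x = c} p) :
    (fderiv ℝ h q).range = (fderiv ℝ h p).range := by
  have hsub := connectedComponentIn_subset {x | x ∈ V ∧ a x = c} p
  have hp : p ∈ {x | x ∈ V ∧ a x = c} := connectedComponentIn_nonempty_iff.1 ⟨q, hq⟩
  refine isPreconnected_connectedComponentIn.induction₂'
    (fun x y ↦ (fderiv ℝ h x).range = (fderiv ℝ h y).range) (fun x hx ↦ ?_)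
    (fun _ _ _ _ _ _ ↦ Eq.trans) hq (mem_connectedComponentIn hp)
  obtain ⟨hxV, hax⟩ := hsub hx
  have hV_nhds := hV.mem_nhds hxV
  have hloc := eventually_range_fderiv_eq (ha.contDiffAt hV_nhds)
    (by filter_upwards [hV_nhds] with y hy; rw [hrank y hy, hrank x hxV])
    (by filter_upwards [hV_nhds] with y hy using hh.differentiableAt (hV.mem_nhds hy))
    (by filter_upwards [hV_nhds] with y hy using hker y hy)
  filter_upwards [self_mem_nhdsWithin, hloc.filter_mono nhdsWithin_le_nhds] with y hy hxy
  have hrange := hxy ((hsub hy).2.trans hax.symm)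
  exact ⟨hrange.symm, hrange⟩

end ConstantRank

section LegendreFunction

variable {E H ι : Type*} [NormedAddCommGroup E] [NormedSpace ℝ E] [NormedAddCommGroup H]
  [NormedSpace ℝ H] [Fintype ι] {V : Set E} {f : E → H} {fi : ι → E → H} {a : E → ι → ℝ}

theorem contDiffOn_coeff_of_fderiv_eq_sum {n : WithTop ℕ∞} (hV : IsOpen V)
    (hf : ContDiffOn ℝ (n + 1) f V) (hfi : ∀ i, ContDiffOn ℝ (n + 1) (fi i) V)
    (hindep : ∀ b ∈ V, LinearIndependent ℝ (fun i ↦ fderiv ℝ (fi i) b))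
    (ha : ∀ b ∈ V, fderiv ℝ f b = ∑ i, a b i • fderiv ℝ (fi i) b) : ContDiffOn ℝ n a V := by
  refine fun b hb ↦ ContDiffAt.contDiffWithinAt ?_
  have hfderiv {g : E → H} (hg : ContDiffOn ℝ (n + 1) g V) : ContDiffAt ℝ n (fderiv ℝ g) b :=
    (hg.contDiffAt (hV.mem_nhds hb)).fderiv_right le_rfl
  refine contDiffAt_of_sum_smul_eq (fun i ↦ hfderiv (hfi i)) (hindep b hb) (hfderiv hf) ?_
  filter_upwards [hV.mem_nhds hb] with x hx using (ha x hx).symm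

theorem hasFDerivAt_prodMk_sum_smul_sub (hV : IsOpen V) (hf : DifferentiableOn ℝ f V)
    (hfi : ∀ i, DifferentiableOn ℝ (fi i) V) (haV : DifferentiableOn ℝ a V)
    (ha : ∀ b ∈ V, fderiv ℝ f b = ∑ i, a b i • fderiv ℝ (fi i) b) {b : E} (hb : b ∈ V) :
    HasFDerivAt (fun x ↦ (a x, ∑ i, a x i • fi i x - f x))
      ((fderiv ℝ a b).prod (linearCombinationL ℝ (fun i ↦ fi i b) ∘L fderiv ℝ a b)) b := by
  have hVb := hV.mem_nhds hb
  have haVb := haV.hasFDerivAt hVb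
  exact haVb.prodMk (hasFDerivAt_sum_smul_sub haVb (fun i ↦ (hfi i).hasFDerivAt hVb)
    (ha b hb ▸ hf.hasFDerivAt hVb))

theorem sum_smul_eq_of_mem_connectedComponentIn [CompleteSpace E] (hV : IsOpen V)
    (hf : ContDiffOn ℝ 2 f V) (hfi : ∀ i, ContDiffOn ℝ 2 (fi i) V)
    (hindep : ∀ b ∈ V, LinearIndependent ℝ (fun i ↦ fderiv ℝ (fi i) b))
    (ha : ∀ b ∈ V, fderiv ℝ f b = ∑ i, a b i • fderiv ℝ (fi i) b) {r : ℕ}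
    (hrank : ∀ b ∈ V, Module.finrank ℝ (fderiv ℝ a b).range = r) {c : ι → ℝ} {p q : E}
    (hq : q ∈ connectedComponentIn {x | x ∈ V ∧ a x = c} p) {u : ι → ℝ}
    (hu : u ∈ (fderiv ℝ a p).range) : ∑ i, u i • fi i q = ∑ i, u i • fi i p := by
  have ha₁ : ContDiffOn ℝ 1 a V := contDiffOn_coeff_of_fderiv_eq_sum hV hf hfi hindep ha
  let L (b : E) := linearCombinationL ℝ fun i ↦ fi i b
  let h (b : E) : (ι → ℝ) × H := (a b, ∑ i, a b i • fi i b - f b)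
  have hh : ∀ b ∈ V, HasFDerivAt h ((fderiv ℝ a b).prod (L b ∘L fderiv ℝ a b)) b := fun b hb ↦
    hasFDerivAt_prodMk_sum_smul_sub hV (hf.differentiableOn two_ne_zero)
      (fun i ↦ (hfi i).differentiableOn two_ne_zero) (ha₁.differentiableOn one_ne_zero) ha hb
  have hrange : (fderiv ℝ h q).range = (fderiv ℝ h p).range := by
    refine range_fderiv_eq_of_mem_connectedComponentIn hV ha₁ hrank
      (fun b hb ↦ (hh b hb).differentiableAt.differentiableWithinAt) (fun b hb v hv ↦ ?_) hq
    have hv' : fderiv ℝ a b v = 0 := hv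
    simp [(hh b hb).fderiv, hv']
  obtain ⟨v, rfl⟩ := hu
  obtain ⟨w, hw⟩ : fderiv ℝ h p v ∈ (fderiv ℝ h q).range := hrange ▸ ⟨v, rfl⟩
  have hqV : q ∈ V := (connectedComponentIn_subset _ _ hq).1
  have hpV : p ∈ V := (connectedComponentIn_nonempty_iff.1 ⟨q, hq⟩).1
  rw [(hh q hqV).fderiv, (hh p hpV).fderiv] at hw
  have hwa : fderiv ℝ a q w = fderiv ℝ a p v := congrArg Prod.fst hw
  have hwL : L q (fderiv ℝ a q w) = L p (fderiv ℝ a p v) := congrArg Prod.snd hw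
  rw [hwa, linearCombinationL_apply, linearCombinationL_apply] at hwL
  exact hwL

end LegendreFunction

section Holomorphic

theorem eventually_norm_smul_lt {𝕜 E : Type*} [NormedField 𝕜] [SeminormedAddCommGroup E]
    [NormedSpace 𝕜 E] (v : E) {δ : ℝ} (hδ : 0 < δ) : ∀ᶠ t : 𝕜 in 𝓝 0, ‖t • v‖ < δ :=
  ContinuousAt.eventually_lt (by fun_prop) continuousAt_const (by simpa)

variable {E F : Type*} [NormedAddCommGroup E] [NormedSpace ℂ E] [NormedAddCommGroup F]
  [NormedSpace ℂ F]

theorem norm_fderiv_le_of_forall_mem_ball_norm_le {f : E → F} {c : E} {R M : ℝ} (hR : 0 < R)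
    (hf : DifferentiableOn ℂ f (ball c R)) (hM : ∀ z ∈ ball c R, ‖f z‖ ≤ M) :
    ‖fderiv ℂ f c‖ ≤ 2 * M / R := by
  refine Complex.norm_fderiv_le_div_of_mapsTo_ball hf (fun z hz ↦ ?_) hR
  calc dist (f z) (f c) ≤ ‖f z‖ + ‖f c‖ := dist_le_norm_add_norm _ _
    _ ≤ 2 * M := by linarith [hM z hz, hM c (mem_ball_self hR)]

theorem norm_sub_sub_fderiv_le_of_forall_mem_ball_norm_le {f : E → F} {c v : E} {R M : ℝ}
    (hf : DifferentiableOn ℂ f (ball c R)) (hM : ∀ z ∈ ball c R, ‖f z‖ ≤ M) (hv : ‖v‖ < R) :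
    ‖f (c + v) - f c - fderiv ℂ f c v‖ ≤ 4 * M * (‖v‖ / R) ^ 2 := by
  have hR : 0 < R := (norm_nonneg v).trans_lt hv
  have hfc : HasFDerivAt f (fderiv ℂ f c) c := hf.hasFDerivAt (ball_mem_nhds c hR)
  let g (z : E) : F := f z - f c - fderiv ℂ f c (z - c)
  have hgc : g c = 0 := by simp [g]
  have hg : DifferentiableOn ℂ g (ball c R) := by fun_prop
  have hg_le : MapsTo g (ball c R) (closedBall (g c) (4 * M)) := by
    intro z hz
    have hderiv : ‖fderiv ℂ f c (z - c)‖ ≤ 2 * M := by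
      calc ‖fderiv ℂ f c (z - c)‖ ≤ 2 * M / R * R :=
            (fderiv ℂ f c).le_of_opNorm_le_of_le
              (norm_fderiv_le_of_forall_mem_ball_norm_le hR hf hM) (mem_ball_iff_norm.1 hz).le
        _ = 2 * M := div_mul_cancel₀ _ hR.ne'
    rw [hgc, mem_closedBall_zero_iff]
    calc ‖g z‖ ≤ ‖f z‖ + ‖f c‖ + ‖fderiv ℂ f c (z - c)‖ :=
          (norm_sub_le _ _).trans (by gcongr; exact norm_sub_le _ _)
      _ ≤ 4 * M := by linarith [hM z hz, hM c (mem_ball_self hR)]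
  have hlittleO : (fun z ↦ g z - g c) =o[𝓝 c] fun z ↦ ‖z - c‖ ^ 1 := by
    simpa only [hgc, sub_zero, pow_one] using (hasFDerivAt_iff_isLittleO.1 hfc).norm_right
  have hschwarz := Complex.dist_le_mul_div_pow_of_mapsTo_ball_of_isLittleO hg hg_le hlittleO
    (z := c + v) (by simpa using hv)
  simpa [g] using hschwarz

theorem tendstoUniformlyOn_fderiv_zero {ι : Type*} {l : Filter ι} {φ : ι → E → F} {c : E}
    {R δ : ℝ} (hδ : 0 < δ) (hφ : ∀ᶠ n in l, DifferentiableOn ℂ (φ n) (ball c (R + δ)))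
    (hlim : TendstoUniformlyOn φ 0 l (ball c (R + δ))) :
    TendstoUniformlyOn (fun n ↦ fderiv ℂ (φ n)) 0 l (ball c R) := by
  rw [Metric.tendstoUniformlyOn_iff] at hlim ⊢
  intro ε hε
  filter_upwards [hφ, hlim (ε * δ / 4) (by positivity)] with n hn hn_le z hz
  have hsub : ball z δ ⊆ ball c (R + δ) :=
    ball_subset_ball' (by linarith [mem_ball.1 hz])
  have hbound : ∀ w ∈ ball z δ, ‖φ n w‖ ≤ ε * δ / 4 := fun w hw ↦ by
    simpa using (hn_le w (hsub hw)).le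
  calc dist (0 : E →L[ℂ] F) (fderiv ℂ (φ n) z) ≤ 2 * (ε * δ / 4) / δ := by
        rw [dist_zero_left]
        exact norm_fderiv_le_of_forall_mem_ball_norm_le hδ (hn.mono hsub) hbound
    _ = ε / 2 := by field_simp; norm_num
    _ < ε := half_lt_self hε

theorem uniformCauchySeqOn_fderiv {ι : Type*} {l : Filter ι} {φ : ι → E → F} {c : E} {R δ : ℝ}
    (hδ : 0 < δ) (hφ : ∀ᶠ n in l, DifferentiableOn ℂ (φ n) (ball c (R + δ)))
    (hcauchy : UniformCauchySeqOn φ l (ball c (R + δ))) :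
    UniformCauchySeqOn (fun n ↦ fderiv ℂ (φ n)) l (ball c R) := by
  rw [SeminormedAddGroup.uniformCauchySeqOn_iff_tendstoUniformlyOn_zero] at hcauchy ⊢
  have hφφ : ∀ᶠ n : ι × ι in l ×ˢ l, DifferentiableOn ℂ (φ n.1) (ball c (R + δ)) ∧
      DifferentiableOn ℂ (φ n.2) (ball c (R + δ)) := hφ.prod_mk hφ
  refine (tendstoUniformlyOn_fderiv_zero hδ (hφφ.mono fun n hn ↦ hn.1.neg.add hn.2)
    hcauchy).congr ?_
  filter_upwards [hφφ] with n hn z hz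
  have hz' : ball c (R + δ) ∈ 𝓝 z :=
    isOpen_ball.mem_nhds (ball_subset_ball (by linarith) hz)
  simp only [fderiv_add (hn.1.differentiableAt hz').neg (hn.2.differentiableAt hz'), fderiv_neg]

theorem differentiableAt_of_tendstoUniformlyOn_ball [CompleteSpace F] {ι : Type*} {l : Filter ι}
    [l.NeBot] {φ : ι → E → F} {g : E → F} {c : E} {R : ℝ} (hR : 0 < R)
    (hφ : ∀ᶠ n in l, DifferentiableOn ℂ (φ n) (ball c R))
    (hlim : TendstoUniformlyOn φ g l (ball c R)) : DifferentiableAt ℂ g c := by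
  have hcauchy : UniformCauchySeqOn (fun n ↦ fderiv ℂ (φ n)) l (ball c (R / 2)) :=
    uniformCauchySeqOn_fderiv (half_pos hR) (by rwa [add_halves])
      (by rw [add_halves]; exact hlim.uniformCauchySeqOn)
  choose! g' hg' using fun z (hz : z ∈ ball c (R / 2)) ↦
    CompleteSpace.complete (hcauchy.cauchy_map hz)
  have hlim' := (hcauchy.tendstoUniformlyOn_of_tendsto hg').tendstoUniformlyOnFilter.mono_right
    (le_principal_iff.2 (ball_mem_nhds c (half_pos hR)))
  refine (hasFDerivAt_of_tendstoUniformlyOnFilter (f := φ) hlim' ?_ ?_).differentiableAt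
  · filter_upwards [hφ.prod_mk (ball_mem_nhds c hR)] with n hn
    exact hn.1.hasFDerivAt (isOpen_ball.mem_nhds hn.2)
  · filter_upwards [ball_mem_nhds c hR] with z hz using hlim.tendsto_at hz

theorem tendstoUniformlyOn_slope {f : E → F} {c v : E} {R δ M : ℝ} (hδ : 0 < δ)
    (hf : DifferentiableOn ℂ f (ball c (R + δ))) (hM : ∀ z ∈ ball c (R + δ), ‖f z‖ ≤ M) :
    TendstoUniformlyOn (fun (t : ℂ) z ↦ t⁻¹ • (f (z + t • v) - f z)) (fun z ↦ fderiv ℂ f z v)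
      (𝓝[≠] 0) (ball c R) := by
  have hlim : Tendsto (fun t : ℂ ↦ 4 * M * ‖v‖ ^ 2 / δ ^ 2 * ‖t‖) (𝓝[≠] 0) (𝓝 0) := by
    refine Tendsto.mono_left ?_ nhdsWithin_le_nhds
    exact Continuous.tendsto' (by fun_prop) _ _ (by simp)
  rw [Metric.tendstoUniformlyOn_iff]
  intro ε hε
  filter_upwards [nhdsWithin_le_nhds (eventually_norm_smul_lt v hδ),
    hlim.eventually_lt_const hε, self_mem_nhdsWithin] with t htδ htε ht z hz
  have hsub : ball z δ ⊆ ball c (R + δ) := ball_subset_ball' (by linarith [mem_ball.1 hz])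
  have hrem := norm_sub_sub_fderiv_le_of_forall_mem_ball_norm_le (hf.mono hsub)
    (fun w hw ↦ hM w (hsub hw)) htδ
  have ht' : 0 < ‖t‖ := norm_pos_iff.2 ht
  calc dist (fderiv ℂ f z v) (t⁻¹ • (f (z + t • v) - f z))
      = ‖t⁻¹ • (f (z + t • v) - f z - fderiv ℂ f z (t • v))‖ := by
        rw [dist_comm, dist_eq_norm, map_smul, smul_sub _ _ (t • _), inv_smul_smul₀ ht]
    _ ≤ ‖t‖⁻¹ * (4 * M * (‖t • v‖ / δ) ^ 2) := by
        rw [norm_smul, norm_inv]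
        gcongr
    _ = 4 * M * ‖v‖ ^ 2 / δ ^ 2 * ‖t‖ := by
        rw [norm_smul]
        field_simp
    _ < ε := htε

theorem differentiableOn_fderiv_apply [CompleteSpace F] {f : E → F} {V : Set E} (hV : IsOpen V)
    (hf : DifferentiableOn ℂ f V) (v : E) : DifferentiableOn ℂ (fun z ↦ fderiv ℂ f z v) V := by
  intro x hx
  have hbdd : ∀ᶠ z in 𝓝 x, z ∈ V ∧ ‖f z‖ < ‖f x‖ + 1 :=
    (hV.eventually_mem hx).and
      ((hf.continuousOn.continuousAt (hV.mem_nhds hx)).norm.eventually_lt_const (lt_add_one _))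
  obtain ⟨ε, hε, hball⟩ := eventually_nhds_iff_ball.1 hbdd
  have hf' : DifferentiableOn ℂ f (ball x (ε / 2 + ε / 2)) := by
    rw [add_halves]
    exact hf.mono fun z hz ↦ (hball z hz).1
  have hslope := tendstoUniformlyOn_slope (v := v) (half_pos hε) hf'
    (M := ‖f x‖ + 1) (by rw [add_halves]; exact fun z hz ↦ (hball z hz).2.le)
  refine (differentiableAt_of_tendstoUniformlyOn_ball (half_pos hε) ?_
    hslope).differentiableWithinAt
  filter_upwards [nhdsWithin_le_nhds (eventually_norm_smul_lt v (half_pos hε))] with t ht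
  have hmaps : MapsTo (fun z ↦ z + t • v) (ball x (ε / 2)) (ball x (ε / 2 + ε / 2)) := by
    intro z hz
    rw [mem_ball_iff_norm, add_sub_right_comm]
    exact (norm_add_le _ _).trans_lt (add_lt_add (mem_ball_iff_norm.1 hz) ht)
  exact ((hf'.comp (by fun_prop) hmaps).sub
    (hf'.mono (ball_subset_ball (by linarith)))).const_smul _

theorem contDiffOn_infty_of_differentiableOn_complex [FiniteDimensional ℂ E] [CompleteSpace F]
    {V : Set E} (hV : IsOpen V) {f : E → F} (hf : DifferentiableOn ℂ f V) :
    ContDiffOn ℂ ∞ f V := by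
  refine contDiffOn_infty.2 fun m ↦ ?_
  induction m generalizing f with
  | zero => exact contDiffOn_zero.2 hf.continuousOn
  | succ m ih =>
    rw [Nat.cast_succ, contDiffOn_succ_iff_fderiv_of_isOpen hV]
    refine ⟨hf, fun h ↦ absurd h (by simp), ?_⟩
    exact contDiffOn_clm_apply.2 fun v ↦ ih (differentiableOn_fderiv_apply hV hf v)

end Holomorphic

theorem stmt_12_general {E H ι : Type*} [NormedAddCommGroup E] [NormedSpace ℝ E] [CompleteSpace E]
    [NormedAddCommGroup H] [NormedSpace ℝ H] [Fintype ι] {r : ℕ} {V : Set E} (hV : IsOpen V)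
    {f : E → H} {fi : ι → E → H} {a : E → ι → ℝ} (hf : ContDiffOn ℝ 2 f V)
    (hfi : ∀ i, ContDiffOn ℝ 2 (fi i) V)
    (hindep : ∀ b ∈ V, LinearIndependent ℝ (fun i ↦ fderiv ℝ (fi i) b))
    (ha : ∀ b ∈ V, fderiv ℝ f b = ∑ i, a b i • fderiv ℝ (fi i) b)
    (hrank : ∀ b ∈ V, Module.finrank ℝ (fderiv ℝ a b).range = r) (c : ι → ℝ) {p : E}
    (hp : p ∈ V) : ∃ u : Fin r → ι → ℝ, LinearIndependent ℝ u ∧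
      ∀ j, ∃ c₀ : H, ∀ q ∈ connectedComponentIn {x | x ∈ V ∧ a x = c} p,
        ∑ i, u j i • fi i q = c₀ := by
  let B := Module.finBasisOfFinrankEq ℝ (fderiv ℝ a p).range (hrank p hp)
  have hB : LinearIndependent ℝ (Submodule.subtype (fderiv ℝ a p).range ∘ B) :=
    B.linearIndependent.map' _ (Submodule.ker_subtype _)
  exact ⟨_, hB, fun j ↦ ⟨_, fun q hq ↦
    sum_smul_eq_of_mem_connectedComponentIn hV hf hfi hindep ha hrank hq (B j).2⟩⟩

/-- (Lemma `lefibrecomp`.) With `f, f₁, …, f_{2n}` holomorphic on an open `V ⊆ ℂⁿ`, the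
`df_i(b)` linearly independent over `ℝ` at each point, `a : V → ℝ^{2n}` the unique real-valued
map with `df = Σᵢ aᵢ dfᵢ`, and `da` of constant rank `r` on `V`: on each connected component of
a fiber of `a`, there are `r` linearly independent real vectors `u⁽ʲ⁾` such that the
holomorphic functions `Σᵢ u⁽ʲ⁾ᵢ fᵢ` are constant. -/
theorem stmt_12 {n r : ℕ} {V : Set (Fin n → ℂ)} (hV : IsOpen V)
    (f : (Fin n → ℂ) → ℂ) (fi : Fin (2 * n) → (Fin n → ℂ) → ℂ)
    (hf : DifferentiableOn ℂ f V) (hfi : ∀ i, DifferentiableOn ℂ (fi i) V)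
    (hindep : ∀ b ∈ V,
      LinearIndependent ℝ (fun i : Fin (2 * n) => (fderiv ℂ (fi i) b).restrictScalars ℝ))
    (a : (Fin n → ℂ) → Fin (2 * n) → ℝ)
    (ha : ∀ b ∈ V, fderiv ℂ f b = ∑ i, ((a b i : ℂ) • fderiv ℂ (fi i) b))
    (hrank : ∀ b ∈ V, Module.finrank ℝ (LinearMap.range (fderiv ℝ a b).toLinearMap) = r) :
    ∀ c : Fin (2 * n) → ℝ, ∀ p ∈ V, a p = c →
      ∃ u : Fin r → (Fin (2 * n) → ℝ), LinearIndependent ℝ u ∧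
        ∀ j : Fin r, ∃ c₀ : ℂ,
          ∀ q ∈ connectedComponentIn {x | x ∈ V ∧ a x = c} p,
            ∑ i, (u j i : ℂ) * fi i q = c₀ := by
  intro c p hp _
  have hsmooth {g : (Fin n → ℂ) → ℂ} (hg : DifferentiableOn ℂ g V) : ContDiffOn ℝ 2 g V :=
    (contDiffOn_infty.1 (contDiffOn_infty_of_differentiableOn_complex hV hg) 2).restrict_scalars ℝ
  have hreal {g : (Fin n → ℂ) → ℂ} (hg : DifferentiableOn ℂ g V) {b} (hb : b ∈ V) :
      fderiv ℝ g b = (fderiv ℂ g b).restrictScalars ℝ :=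
    (hg.differentiableAt (hV.mem_nhds hb)).fderiv_restrictScalars ℝ
  simp only [← Complex.real_smul]
  refine stmt_12_general hV (hsmooth hf) (fun i ↦ hsmooth (hfi i)) (fun b hb ↦ ?_)
    (fun b hb ↦ ?_) hrank c hp
  · simpa only [hreal (hfi _) hb] using hindep b hb
  · ext v
    simp only [hreal hf hb, hreal (hfi _) hb, ha b hb]
    simp
end
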